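/- arXiv:2307.05005 — 7 statements merged into one kernel-verified Lean document; each statement's English description precedes it below -/
import Mathlib

section
/- Let L be a geometric lattice. Then the family I(L) of independent sets of L equals the family of independent sets of the matroid corresponding to L; concretely, a finite set A of atoms of L is NBB in (L,ω) for some linear order ω on the atoms of L if and only if |A| = rk(⋁A). -/
open Set

/-- `rk` is a rank function witnessing that a (bounded) lattice is graded:
it sends `⊥` to `0`, is strictly monotone, and increases by exactly one along covers. -/
def IsGradedRk {L : Type*} [CompleteLattice L] (rk : L → ℕ) : Prop :=
  rk ⊥ = 0 ∧ (∀ a b : L, a < b → rk a < rk b) ∧ (∀ a b : L, a ⋖ b → rk b = rk a + 1)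

/-- `D` is bounded below with respect to the order on atoms encoded by the labeling `ω`:
`D` is nonempty and some atom `a` is a strict `ω`-lower bound of every element of `D`
with `a ≤ ⋁ D`. -/
def IsBB {L : Type*} [CompleteLattice L] (ω : L → ℕ) (D : Set L) : Prop :=
  D.Nonempty ∧ ∃ a : L, IsAtom a ∧ (∀ d ∈ D, ω a < ω d) ∧ a ≤ sSup D

/-- `B` is a set of atoms containing no bounded-below subset. -/
def IsNBB {L : Type*} [CompleteLattice L] (ω : L → ℕ) (B : Set L) : Prop :=
  (∀ b ∈ B, IsAtom b) ∧ ∀ D ⊆ B, ¬ IsBB ω D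

/-- The family `I(L)` of independent sets of the lattice `L`: all sets of atoms that are
NBB with respect to some linear order on the atoms (a linear order on the atoms of the
finite lattice `L` being encoded as an `ℕ`-valued labeling injective on atoms). -/
def latIndep (L : Type*) [CompleteLattice L] : Set (Set L) :=
  { A | ∃ ω : L → ℕ, Set.InjOn ω {a : L | IsAtom a} ∧ IsNBB ω A }

theorem rk_ins_le {L : Type*} [CompleteLattice L] 
    (rk : L → ℕ) (hrk : IsGradedRk rk)
    (hsub : ∀ x y : L, rk (x ⊔ y) + rk (x ⊓ y) ≤ rk x + rk y)
    (a : L) (ha : IsAtom a) (S : Set L) :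
    rk (sSup (insert a S)) ≤ rk (sSup S) + 1 := by
  have h1 := hrk.2.2 ⊥ a ha.bot_covBy
  have h0 := hrk.1
  have h2 := hsub a (sSup S)
  rw [sSup_insert]
  omega

theorem rk_le_card {L : Type*} [CompleteLattice L] 
    (rk : L → ℕ) (hrk : IsGradedRk rk)
    (hsub : ∀ x y : L, rk (x ⊔ y) + rk (x ⊓ y) ≤ rk x + rk y)
    (S : Finset L) (hS : ∀ a ∈ S, IsAtom a) :
    rk (sSup (S : Set L)) ≤ S.card := by
  classical
  induction S using Finset.induction_on with
  | empty => simp [hrk.1]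
  | insert a s has ih =>
    have h1 := ih (fun b hb => hS b (Finset.mem_insert_of_mem hb))
    have h2 := rk_ins_le rk hrk hsub a (hS a (Finset.mem_insert_self _ _)) (s : Set L)
    rw [Finset.card_insert_of_notMem has, Finset.coe_insert]
    omega

theorem nbb_card {L : Type*} [CompleteLattice L]
    (rk : L → ℕ) (hrk : IsGradedRk rk)
    (hsub : ∀ x y : L, rk (x ⊔ y) + rk (x ⊓ y) ≤ rk x + rk y)
    (ω : L → ℕ) (hω : Set.InjOn ω {a : L | IsAtom a})
    (S : Finset L) (hS : IsNBB ω (S : Set L)) :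
    S.card = rk (sSup (S : Set L)) := by
  classical
  induction S using Finset.induction_on_min_value ω with
  | empty => simp [hrk.1]
  | insert a s has hmin ih =>
    rw [Finset.coe_insert] at hS ⊢
    have ha : IsAtom a := hS.1 a (Set.mem_insert _ _)
    have h1 := ih ⟨fun b hb => hS.1 b (Set.mem_insert_of_mem _ hb),
      fun D hD => hS.2 D (hD.trans (Set.subset_insert _ _))⟩
    have h2 := rk_ins_le rk hrk hsub a ha (s : Set L)
    have h3 : ¬ a ≤ sSup (s : Set L) := by
      intro hle
      apply hS.2 (s : Set L) (Set.subset_insert _ _)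
      refine ⟨?_, a, ha, ?_, hle⟩
      · by_contra hne
        rw [Set.not_nonempty_iff_eq_empty] at hne
        rw [hne, sSup_empty] at hle
        exact ha.1 (le_bot_iff.1 hle)
      · intro d hd
        refine lt_of_le_of_ne (hmin d hd) fun he => has ?_
        rw [hω ha (hS.1 d (Set.mem_insert_of_mem _ hd)) he]
        exact hd
    have h4 := hrk.2.1 (sSup (s : Set L)) (sSup (insert a (s : Set L))) (by
      rw [sSup_insert]; exact right_lt_sup.2 h3)
    rw [Finset.card_insert_of_notMem has]
    omega

/-- In a geometric lattice (finite, atomic, graded, with submodular rank),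
a set `A` of atoms is independent (NBB for some linear order on the atoms) if and only if
`|A| = rk (⋁ A)`. -/
theorem latIndep_iff_ncard_eq_rank_sSup
    {L : Type*} [CompleteLattice L] [Fintype L] [IsAtomistic L]
    (rk : L → ℕ) (hrk : IsGradedRk rk)
    (hsub : ∀ x y : L, rk (x ⊔ y) + rk (x ⊓ y) ≤ rk x + rk y)
    (A : Set L) (hA : ∀ a ∈ A, IsAtom a) :
    A ∈ latIndep L ↔ A.ncard = rk (sSup A) := by
  classical
  constructor
  · rintro ⟨ω, hω, hN⟩
    have h := nbb_card rk hrk hsub ω hω (Set.toFinite A).toFinset (by simpa using hN)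
    rw [Set.ncard_eq_toFinset_card A (Set.toFinite A), h, Set.Finite.coe_toFinset]
  · intro hc
    let e := Fintype.equivFin L
    refine ⟨fun x => if x ∈ A then (e x : ℕ) else Fintype.card L + (e x : ℕ), ?_, hA, ?_⟩
    · intro x _ y _ hxy
      have hx := (e x).2
      have hy := (e y).2
      apply e.injective
      apply Fin.ext
      dsimp only at hxy
      split_ifs at hxy <;> omega
    · rintro D hD ⟨⟨d, hd⟩, a, ha, hlt, hle⟩
      have haA : a ∈ A := by
        by_contra hn
        have h := hlt d hd
        have hx := (e d).2
        simp only [hn, hD hd, if_true, if_false] at h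
        omega
      have hsubD : D ⊆ A \ {a} := fun x hx =>
        ⟨hD hx, fun he => by
          have h := hlt x hx
          rw [Set.mem_singleton_iff.1 he] at h
          exact lt_irrefl _ h⟩
      have hle2 : a ≤ sSup (A \ {a}) := hle.trans (sSup_le_sSup hsubD)
      have heq : sSup A = sSup (A \ {a}) := by
        conv_lhs => rw [← Set.insert_sdiff_self_of_mem haA, sSup_insert]
        exact sup_eq_right.2 hle2
      have h := rk_le_card rk hrk hsub (Set.toFinite (A \ {a})).toFinset
        (fun b hb => hA b ((Set.Finite.mem_toFinset _).1 hb).1)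
      rw [Set.Finite.coe_toFinset, ← Set.ncard_eq_toFinset_card, ← heq] at h
      have h5 := Set.ncard_sdiff_singleton_lt_of_mem haA (Set.toFinite A)
      omega
end

section
/- Let L be a finite atomic graded lattice, P a geometric lattice, and f' : A(L) → A(P) a bijection between their sets of atoms. If f' can be extended to a map f : L → P that is an order embedding (X ≤ Y iff f(X) ≤ f(Y)) and rank-preserving (rk_P(f(X)) = rk_L(X) for all X ∈ L), then the image under f' of every set in I(L) belongs to I(P). -/
open Set

/-- Let `L` be a finite atomic graded lattice, `P` a geometric lattice and
`f'` a bijection between their sets of atoms. If `f'` extends to a rank-preserving order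
embedding `f : L → P`, then the image under `f'` of every independent set of `L` is an
independent set of `P`. -/
theorem image_latIndep_of_extends_to_embedding
    {L P : Type*} [CompleteLattice L] [Fintype L] [IsAtomistic L]
    [CompleteLattice P] [Fintype P] [IsAtomistic P]
    (rkL : L → ℕ) (hrkL : IsGradedRk rkL)
    (rkP : P → ℕ) (hrkP : IsGradedRk rkP)
    (hsubP : ∀ x y : P, rkP (x ⊔ y) + rkP (x ⊓ y) ≤ rkP x + rkP y)
    (f' : L → P) (hf' : Set.BijOn f' {a : L | IsAtom a} {a : P | IsAtom a})
    (hext : ∃ f : L → P, (∀ a : L, IsAtom a → f a = f' a) ∧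
      (∀ X Y : L, X ≤ Y ↔ f X ≤ f Y) ∧ (∀ X : L, rkP (f X) = rkL X)) :
    ∀ A ∈ latIndep L, f' '' A ∈ latIndep P := by
  obtain ⟨f, hfa, hfo, -⟩ := hext
  rintro A ⟨ω, hinj, hat, hA⟩
  have hleft := hf'.injOn.leftInvOn_invFunOn
  have hmem : ∀ p : P, IsAtom p → IsAtom (Function.invFunOn f' {a : L | IsAtom a} p) ∧
      f' (Function.invFunOn f' {a : L | IsAtom a} p) = p := by
    intro p hp
    have h := hf'.surjOn hp
    exact ⟨Function.invFunOn_mem h, Function.invFunOn_eq h⟩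
  refine ⟨fun p => ω (Function.invFunOn f' {a : L | IsAtom a} p), ?_, ?_, ?_⟩
  · intro p hp q hq h
    have := hinj (hmem p hp).1 (hmem q hq).1 h
    rw [← (hmem p hp).2, ← (hmem q hq).2, this]
  · rintro _ ⟨a, ha, rfl⟩
    exact hf'.mapsTo (hat a ha)
  · rintro D hD ⟨⟨d₀, hd₀⟩, a, ha, hlt, hle⟩
    refine hA {x | x ∈ A ∧ f' x ∈ D} (fun x hx => hx.1) ⟨?_, _, (hmem a ha).1, ?_, ?_⟩
    · obtain ⟨x, hx, rfl⟩ := hD hd₀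
      exact ⟨x, hx, hd₀⟩
    · rintro d ⟨hdA, hdD⟩
      have := hlt _ hdD
      simp only [hleft (hat d hdA)] at this
      exact this
    · rw [hfo, hfa _ (hmem a ha).1, (hmem a ha).2]
      refine hle.trans (sSup_le ?_)
      intro d hd
      obtain ⟨x, hx, rfl⟩ := hD hd
      rw [← hfa x (hat x hx), ← hfo]
      exact le_sSup ⟨hx, hd⟩
end

section
/- Let L be a finite graded lattice (not necessarily atomic) and P a geometric lattice. If there exists a rank-preserving order embedding f : L → P (X ≤ Y iff f(X) ≤ f(Y), and rk_P(f(X)) = rk_L(X) for all X) whose restriction to A(L) is an injection into A(P), then the image under f of every set in I(L) belongs to I(P). -/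
open Set

/-- Let `L` be a finite graded lattice (not necessarily atomic) and `P` a
geometric lattice. If `f : L → P` is a rank-preserving order embedding whose restriction to
the atoms of `L` is an injection into the atoms of `P`, then the image under `f` of every
independent set of `L` is an independent set of `P`. -/
theorem image_latIndep_of_embedding
    {L P : Type*} [CompleteLattice L] [Fintype L]
    [CompleteLattice P] [Fintype P] [IsAtomistic P]
    (rkL : L → ℕ) (hrkL : IsGradedRk rkL)
    (rkP : P → ℕ) (hrkP : IsGradedRk rkP)
    (hsubP : ∀ x y : P, rkP (x ⊔ y) + rkP (x ⊓ y) ≤ rkP x + rkP y)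
    (f : L → P)
    (hemb : ∀ X Y : L, X ≤ Y ↔ f X ≤ f Y)
    (hrank : ∀ X : L, rkP (f X) = rkL X)
    (hinj : Set.InjOn f {a : L | IsAtom a})
    (hmaps : Set.MapsTo f {a : L | IsAtom a} {a : P | IsAtom a}) :
    ∀ A ∈ latIndep L, f '' A ∈ latIndep P := by
  classical
  rintro A ⟨ω, hω, hA, hNBB⟩
  have finj : Function.Injective f := fun x y h =>
    le_antisymm ((hemb x y).2 h.le) ((hemb y x).2 h.ge)
  obtain ⟨M, hM⟩ : ∃ M, ∀ x, ω x ≤ M :=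
    ⟨Finset.univ.sup ω, fun x => Finset.le_sup (Finset.mem_univ x)⟩
  let e := Fintype.equivFin P
  let g : P → L := Function.invFun f
  have hg : ∀ x, g (f x) = x := Function.leftInverse_invFun finj
  let w : P → ℕ := fun p => if p ∈ f '' A then ω (g p) else M + 1 + (e p : ℕ)
  have hw1 : ∀ a ∈ A, w (f a) = ω a := by
    intro a ha
    have : f a ∈ f '' A := ⟨a, ha, rfl⟩
    simp only [w, if_pos this, hg]
  have hw2 : ∀ p, p ∉ f '' A → w p = M + 1 + (e p : ℕ) := by
    intro p hp
    simp only [w, if_neg hp]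
  refine ⟨w, ?_, ?_, ?_⟩
  · intro p _ q _ h
    by_cases hp : p ∈ f '' A <;> by_cases hq : q ∈ f '' A
    · obtain ⟨a, ha, rfl⟩ := hp
      obtain ⟨b, hb, rfl⟩ := hq
      rw [hw1 a ha, hw1 b hb] at h
      rw [hω (hA a ha) (hA b hb) h]
    · obtain ⟨a, ha, rfl⟩ := hp
      rw [hw1 a ha, hw2 q hq] at h
      have := hM a
      omega
    · obtain ⟨b, hb, rfl⟩ := hq
      rw [hw1 b hb, hw2 p hp] at h
      have := hM b
      omega
    · rw [hw2 p hp, hw2 q hq] at h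
      exact e.injective (Fin.ext (by omega))
  · rintro _ ⟨a, ha, rfl⟩
    exact hmaps (hA a ha)
  · rintro D hD ⟨⟨d, hd⟩, p, _, hlt, hle⟩
    have hp : p ∈ f '' A := by
      by_contra hp
      have h := hlt d hd
      obtain ⟨b, hb, rfl⟩ := hD hd
      rw [hw1 b hb, hw2 p hp] at h
      have := hM b
      omega
    obtain ⟨a, ha, rfl⟩ := hp
    have hsub : f ⁻¹' D ⊆ A := by
      intro x hx
      obtain ⟨b, hb, hbx⟩ := hD hx
      rwa [← finj hbx]
    refine hNBB (f ⁻¹' D) hsub ⟨?_, a, hA a ha, ?_, ?_⟩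
    · obtain ⟨b, hb, rfl⟩ := hD hd
      exact ⟨b, hd⟩
    · intro x hx
      have := hlt (f x) hx
      rwa [hw1 a ha, hw1 x (hsub hx)] at this
    · refine (hemb _ _).2 (hle.trans (sSup_le ?_))
      intro q hq
      obtain ⟨b, hb, rfl⟩ := hD hq
      exact (hemb _ _).1 (le_sSup hq)
end

section
/- Let L be a finite atomic graded lattice and X ∈ L an element of rank at least 1. Then the family of independent sets of the restriction lattice [⊥, X] satisfies I([⊥, X]) = { I ∩ A(X) : I ∈ I(L) }, where A(X) denotes the set of atoms of L below X. -/
open Set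

/-- Let `L` be a finite atomic graded lattice and `X ∈ L` of rank at least
one. Then the independent sets of the restriction `[⊥, X]` (the interval `Set.Iic X`) are
exactly the sets of the form `I ∩ A(X)` for `I ∈ I(L)`, where `A(X)` is the set of atoms of
`L` lying below `X`. -/
theorem latIndep_Iic
    {L : Type*} [CompleteLattice L] [Fintype L] [IsAtomistic L]
    (rk : L → ℕ) (hrk : IsGradedRk rk)
    (X : L) (hX : 1 ≤ rk X) :
    latIndep (Set.Iic X) =
      {S : Set (Set.Iic X) |
        ∃ I ∈ latIndep L, Subtype.val '' S = I ∩ {a : L | IsAtom a ∧ a ≤ X}} := by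
  have hat : ∀ a : Set.Iic X, IsAtom a ↔ IsAtom (a : L) := fun a =>
    ⟨fun h => h.of_isAtom_coe_Iic, fun h => IsAtom.Iic h a.2⟩
  have hsup : ∀ D : Set (Set.Iic X), ((sSup D : Set.Iic X) : L) = sSup (Subtype.val '' D) :=
    fun D => Set.Iic.coe_sSup D
  ext S
  constructor
  · rintro ⟨ω, hinj, hA, hD⟩
    classical
    let e := Fintype.equivFin L
    let ω' : L → ℕ := fun a => if h : a ≤ X then 2 * ω ⟨a, h⟩ else 2 * (e a : ℕ) + 1
    have hω : ∀ a : Set.Iic X, ω' a = 2 * ω a := fun a => dif_pos a.2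
    have hω2 : ∀ a : L, ¬ a ≤ X → ω' a = 2 * (e a : ℕ) + 1 := fun a h => dif_neg h
    refine ⟨Subtype.val '' S, ⟨ω', ?_, ?_, ?_⟩, ?_⟩
    · intro a ha b hb hab
      by_cases h1 : a ≤ X <;> by_cases h2 : b ≤ X
      · have e1 := hω ⟨a, h1⟩
        have e2 := hω ⟨b, h2⟩
        have := hinj ((hat ⟨a, h1⟩).2 ha) ((hat ⟨b, h2⟩).2 hb)
          (by simp only at e1 e2; omega)
        exact congrArg Subtype.val this
      · have e1 := hω ⟨a, h1⟩
        have e2 := hω2 b h2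
        simp only at e1; omega
      · have e1 := hω ⟨b, h2⟩
        have e2 := hω2 a h1
        simp only at e1; omega
      · have e1 := hω2 a h1
        have e2 := hω2 b h2
        exact e.injective (Fin.ext (by omega))
    · rintro _ ⟨b, hb, rfl⟩
      exact (hat b).1 (hA b hb)
    · intro D hDS hBB
      obtain ⟨T, hTS, rfl⟩ := Set.subset_image_iff.1 hDS
      obtain ⟨hne, a, ha, hlt, hle⟩ := hBB
      rw [← hsup] at hle
      have haX : a ≤ X := hle.trans (sSup T).2
      refine hD T hTS ⟨hne.of_image, ⟨a, haX⟩, (hat _).2 ha, ?_, hle⟩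
      intro d hd
      have h1 := hlt d ⟨d, hd, rfl⟩
      have e1 := hω ⟨a, haX⟩
      have e2 := hω d
      simp only at e1; omega
    · symm
      rw [Set.inter_eq_left]
      rintro _ ⟨b, hb, rfl⟩
      exact ⟨(hat b).1 (hA b hb), b.2⟩
  · rintro ⟨I, ⟨ω, hinj, hA, hD⟩, hS⟩
    have hSI : ∀ b ∈ S, (b : L) ∈ I ∩ {a : L | IsAtom a ∧ a ≤ X} := fun b hb =>
      hS ▸ ⟨b, hb, rfl⟩
    refine ⟨fun a => ω a, ?_, ?_, ?_⟩
    · intro a ha b hb hab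
      exact Subtype.ext (hinj ((hat a).1 ha) ((hat b).1 hb) hab)
    · intro b hb
      exact (hat b).2 (hSI b hb).2.1
    · rintro D hDS ⟨hne, a, ha, hlt, hle⟩
      refine hD (Subtype.val '' D) ?_ ⟨hne.image _, a, (hat a).1 ha, ?_, ?_⟩
      · rintro _ ⟨b, hb, rfl⟩
        exact (hSI b (hDS hb)).1
      · rintro _ ⟨b, hb, rfl⟩
        exact hlt b hb
      · rw [← hsup]; exact hle
end

section
/- Let L be a finite atomic graded lattice, let B be a basis of L, and let I be a maximal (under inclusion) independent set of L. Then for every atom a ∈ B there exists an atom b ∈ I such that (B ∖ {a}) ∪ {b} is a maximal independent set of L. -/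
open Set

/-- A basis of a (finite atomic graded) lattice with rank function `rk`: a maximal
independent set every subset of which is geometric. -/
def IsLatBasis {L : Type*} [CompleteLattice L] (rk : L → ℕ) (B : Set L) : Prop :=
  B ∈ latIndep L ∧ (∀ A ∈ latIndep L, B ⊆ A → A = B) ∧ ∀ S ⊆ B, S.ncard = rk (sSup S)

theorem aux_insert {L : Type*} [CompleteLattice L] {A : Set L} (hA : A ∈ latIndep L) {b : L}
    (hb : IsAtom b) (hbA : ¬ b ≤ sSup A) : insert b A ∈ latIndep L := by
  classical
  obtain ⟨ω, hinj, hat, hn⟩ := hA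
  refine ⟨fun x => if x = b then 0 else ω x + 1, ?_, ?_, ?_⟩
  · intro x hx y hy h
    by_cases h1 : x = b <;> by_cases h2 : y = b <;> simp [h1, h2] at h ⊢
    exact hinj hx hy h
  · rintro x (rfl | hx)
    · exact hb
    · exact hat x hx
  · rintro D hD ⟨hne, c, hc, hlt, hle⟩
    have hbD : b ∉ D := fun h => by simpa using hlt b h
    have hDA : D ⊆ A := fun x hx => by
      rcases hD hx with rfl | h
      · exact absurd hx hbD
      · exact h
    have hcb : c ≠ b := by
      rintro rfl
      exact hbA (hle.trans (sSup_le_sSup hDA))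
    refine hn D hDA ⟨hne, c, hc, fun d hd => ?_, hle⟩
    have hdb : d ≠ b := fun h => hbD (h ▸ hd)
    have := hlt d hd
    simpa [hcb, hdb] using this

theorem aux_card {L : Type*} [CompleteLattice L] [Finite L] (rk : L → ℕ) (hrk : IsGradedRk rk)
    (ω : L → ℕ) (hinj : Set.InjOn ω {a : L | IsAtom a}) :
    ∀ (n : ℕ) (A : Set L), A.ncard = n → IsNBB ω A → n ≤ rk (sSup A) := by
  intro n
  induction n with
  | zero => intros; exact Nat.zero_le _
  | succ n ih =>
    intro A hcard hA
    have hne : A.Nonempty := by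
      rw [← Set.ncard_pos]; omega
    obtain ⟨a, ha, hmin⟩ := Set.exists_min_image A ω (Set.toFinite A) hne
    have h1 := ih (A \ {a}) (by rw [Set.ncard_diff_singleton_of_mem ha]; omega)
      ⟨fun x hx => hA.1 x hx.1, fun D hD => hA.2 D (hD.trans diff_subset)⟩
    have hna : ¬ a ≤ sSup (A \ {a}) := by
      intro hle
      rcases (A \ {a}).eq_empty_or_nonempty with h | h
      · rw [h, sSup_empty, le_bot_iff] at hle
        exact (hA.1 a ha).1 hle
      · refine hA.2 _ diff_subset ⟨h, a, hA.1 a ha, fun d hd => ?_, hle⟩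
        refine lt_of_le_of_ne (hmin d hd.1) fun e => hd.2 ?_
        exact (hinj (hA.1 a ha) (hA.1 d hd.1) e).symm
    have h2 : sSup (A \ {a}) < sSup A :=
      lt_of_le_of_ne (sSup_le_sSup diff_subset) fun e => hna (e ▸ le_sSup ha)
    have := hrk.2.1 _ _ h2
    omega

theorem aux_top {L : Type*} [CompleteLattice L] [IsAtomistic L] {A : Set L}
    (hA : A ∈ latIndep L) (hmax : ∀ A' ∈ latIndep L, A ⊆ A' → A' = A) : sSup A = ⊤ := by
  rw [eq_top_iff, le_iff_atom_le_imp]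
  intro c hc _
  by_contra h
  have := hmax _ (aux_insert hA hc h) (subset_insert _ _)
  exact h (le_sSup (this ▸ mem_insert c A))

/-- Let `L` be a finite atomic graded lattice, `B` a basis of `L` and `I` a
maximal independent set of `L`. Then for every atom `a ∈ B` there is an atom `b ∈ I` such
that `(B \ {a}) ∪ {b}` is again a maximal independent set of `L`. -/
theorem basis_exchange
    {L : Type*} [CompleteLattice L] [Fintype L] [IsAtomistic L]
    (rk : L → ℕ) (hrk : IsGradedRk rk)
    (B I : Set L) (hB : IsLatBasis rk B)
    (hI : I ∈ latIndep L) (hImax : ∀ A ∈ latIndep L, I ⊆ A → A = I)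
    (a : L) (ha : a ∈ B) :
    ∃ b ∈ I, insert b (B \ {a}) ∈ latIndep L ∧
      ∀ A ∈ latIndep L, insert b (B \ {a}) ⊆ A → A = insert b (B \ {a}) := by
  obtain ⟨hBi, hBmax, hBg⟩ := hB
  have hBt := aux_top hBi hBmax
  have hIt := aux_top hI hImax
  have hc : B.ncard = rk ⊤ := by rw [hBg B subset_rfl, hBt]
  have hpos : 0 < B.ncard := (Set.ncard_pos (Set.toFinite B)).2 ⟨a, ha⟩
  have hcd : (B \ {a}).ncard = B.ncard - 1 := Set.ncard_diff_singleton_of_mem ha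
  have hH : sSup (B \ {a}) ≠ ⊤ := by
    intro h
    have := hBg (B \ {a}) diff_subset
    rw [h] at this
    omega
  obtain ⟨b, hbI, hb⟩ : ∃ b ∈ I, ¬ b ≤ sSup (B \ {a}) := by
    by_contra! h
    exact hH (top_le_iff.1 (hIt ▸ sSup_le h))
  have hbat : IsAtom b := by
    obtain ⟨ω, _, h, _⟩ := hI
    exact h b hbI
  have hdi : B \ {a} ∈ latIndep L := by
    obtain ⟨ω, h1, h2, h3⟩ := hBi
    exact ⟨ω, h1, fun x hx => h2 x hx.1, fun D hD => h3 D (hD.trans diff_subset)⟩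
  refine ⟨b, hbI, aux_insert hdi hbat hb, ?_⟩
  rintro A ⟨ω, hinj, hA⟩ hsub
  have h1 := aux_card rk hrk ω hinj _ A rfl hA
  have h2 : rk (sSup A) ≤ rk ⊤ := by
    rcases (le_top : sSup A ≤ ⊤).eq_or_lt with h | h
    · rw [h]
    · exact (hrk.2.1 _ _ h).le
  have h3 : (insert b (B \ {a})).ncard = (B \ {a}).ncard + 1 :=
    Set.ncard_insert_of_notMem (fun h => hb (le_sSup h)) (Set.toFinite _)
  exact (Set.eq_of_subset_of_ncard_le hsub (by omega) (Set.toFinite A)).symm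
end

section
/- Let L be a finite atomic graded lattice and B a basis of L. For every atom a ∉ B, the set B ∪ {a} contains a unique minimal dependent subset (a subset not belonging to I(L) all of whose proper subsets belong to I(L)), denoted C_{B,a}. -/
open Set

theorem latIndep_mono {L : Type*} [CompleteLattice L] {A C : Set L}
    (hA : A ∈ latIndep L) (h : C ⊆ A) : C ∈ latIndep L := by
  obtain ⟨w, hw, h1, h2⟩ := hA
  exact ⟨w, hw, fun b hb => h1 b (h hb), fun D hD => h2 D (hD.trans h)⟩

theorem latIndep_extend {L : Type*} [CompleteLattice L] {C : Set L} {s : L}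
    (hs : IsAtom s) (hC : C \ {s} ∈ latIndep L) (hn : ¬ s ≤ sSup (C \ {s})) :
    C ∈ latIndep L := by
  classical
  obtain ⟨w, hw, h1, h2⟩ := hC
  refine ⟨fun x => if x = s then 0 else w x + 1, ?_, ?_, ?_⟩
  · intro x hx y hy hxy
    by_cases hxs : x = s <;> by_cases hys : y = s <;> simp [hxs, hys] at hxy
    · rw [hxs, hys]
    · exact hw hx hy hxy
  · intro b hb
    by_cases hbs : b = s
    · rw [hbs]; exact hs
    · exact h1 b ⟨hb, hbs⟩
  · rintro D hD ⟨hne, c, hc, hlt, hle⟩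
    have hsD : s ∉ D := by
      intro h
      have := hlt s h
      simp at this
    have hDC : D ⊆ C \ {s} := fun x hx => ⟨hD hx, fun h => hsD (h ▸ hx)⟩
    by_cases hcs : c = s
    · exact hn (hcs.symm.le.trans (hle.trans (sSup_le_sSup hDC)))
    · refine h2 D hDC ⟨hne, c, hc, fun d hd => ?_, hle⟩
      have := hlt d hd
      have hds : d ≠ s := fun h => hsD (h ▸ hd)
      simpa [hcs, hds] using this

theorem basis_mem_of_le {L : Type*} [CompleteLattice L] [Fintype L]
    {rk : L → ℕ} {B : Set L} (hB : IsLatBasis rk B) {b : L} {S : Set L}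
    (hb : b ∈ B) (hS : S ⊆ B) (hle : b ≤ sSup S) : b ∈ S := by
  by_contra hn
  have h1 := hB.2.2 (insert b S) (Set.insert_subset hb hS)
  have h2 := hB.2.2 S hS
  rw [sSup_insert, sup_eq_right.mpr hle, ← h2,
    Set.ncard_insert_of_notMem hn (Set.toFinite S)] at h1
  omega

theorem circuit_sub {L : Type*} [CompleteLattice L] [Fintype L]
    {rk : L → ℕ} {B : Set L} (hB : IsLatBasis rk B) {a : L} (haAtom : IsAtom a)
    {C C' : Set L}
    (hC : C ⊆ insert a B ∧ C ∉ latIndep L ∧ ∀ D ⊂ C, D ∈ latIndep L)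
    (hC' : C' ⊆ insert a B ∧ C' ∉ latIndep L ∧ ∀ D ⊂ C', D ∈ latIndep L) : C ⊆ C' := by
  have key : ∀ E : Set L, (E ⊆ insert a B ∧ E ∉ latIndep L ∧ ∀ D ⊂ E, D ∈ latIndep L) →
      a ∈ E ∧ ∀ s ∈ E, s ≤ sSup (E \ {s}) := by
    rintro E ⟨h1, h2, h3⟩
    constructor
    · by_contra hn
      refine h2 (latIndep_mono hB.1 fun x hx => ?_)
      rcases h1 hx with h | h
      · exact absurd (h ▸ hx) hn
      · exact h
    · intro s hs
      by_contra hn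
      have hsat : IsAtom s := by
        rcases h1 hs with h | h
        · exact h ▸ haAtom
        · obtain ⟨w, -, h4, -⟩ := hB.1
          exact h4 s h
      exact h2 (latIndep_extend hsat (h3 _ (Set.sdiff_singleton_ssubset.mpr hs)) hn)
  obtain ⟨_, hk⟩ := key C hC
  obtain ⟨ha', hk'⟩ := key C' hC'
  intro s hs
  by_contra hn
  have hsa : s ≠ a := fun h => hn (h ▸ ha')
  have hsB : s ∈ B := (hC.1 hs).resolve_left hsa
  have hmem : s ∈ (C' \ {a}) ∪ (C \ {s, a}) := by
    refine basis_mem_of_le hB hsB ?_ ?_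
    · rintro x (⟨hx, hxa⟩ | ⟨hx, hxa⟩)
      · exact (hC'.1 hx).resolve_left hxa
      · exact (hC.1 hx).resolve_left fun h => hxa (Or.inr h)
    · refine (hk s hs).trans (sSup_le fun x hx => ?_)
      by_cases hxa : x = a
      · rw [hxa]
        exact (hk' a ha').trans (sSup_le_sSup Set.subset_union_left)
      · refine le_sSup (Or.inr ⟨hx.1, ?_⟩)
        rintro (h | h)
        · exact hx.2 h
        · exact hxa h
  rcases hmem with h | h
  · exact hn h.1
  · exact h.2 (Or.inl rfl)

/-- Let `L` be a finite atomic graded lattice and `B` a basis of `L`. For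
every atom `a ∉ B`, the set `B ∪ {a}` contains a unique minimal dependent subset (a set not
in `I(L)` all of whose proper subsets are in `I(L)`). -/
theorem fundamental_circuit_unique
    {L : Type*} [CompleteLattice L] [Fintype L] [IsAtomistic L]
    (rk : L → ℕ) (hrk : IsGradedRk rk)
    (B : Set L) (hB : IsLatBasis rk B)
    (a : L) (haAtom : IsAtom a) (ha : a ∉ B) :
    ∃! C : Set L, C ⊆ insert a B ∧ C ∉ latIndep L ∧ ∀ D ⊂ C, D ∈ latIndep L := by
  have hdep : insert a B ∉ latIndep L := fun h =>
    ha (hB.2.1 _ h (Set.subset_insert a B) ▸ Set.mem_insert a B)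
  obtain ⟨C, hCs, hCm⟩ := (Set.toFinite {C : Set L | C ∉ latIndep L}).exists_le_minimal hdep
  have hC : C ⊆ insert a B ∧ C ∉ latIndep L ∧ ∀ D ⊂ C, D ∈ latIndep L := by
    refine ⟨hCs, hCm.1, fun D hD => ?_⟩
    by_contra hn
    exact hD.2 (hCm.2 hn hD.1)
  exact ⟨C, hC, fun C' hC' =>
    Set.Subset.antisymm (circuit_sub hB haAtom hC' hC) (circuit_sub hB haAtom hC hC')⟩
end

section
/- Let L be a finite atomic, coatomic, graded lattice. For a basis I of L define I^opp := { ⋁(I ∖ {a}) : a ∈ I }, a set of coatoms of L, i.e. atoms of the dual lattice L^opp. Then I^opp is a basis of L^opp, and the map opp : B(L) → B(L^opp) sending I to I^opp is a bijection from the set of bases of L to the set of bases of L^opp. -/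
open Set

lemma gr_mono {L : Type*} [CompleteLattice L] {rk : L → ℕ} (hrk : IsGradedRk rk) {a b : L}
    (h : a ≤ b) : rk a ≤ rk b := by
  rcases h.eq_or_lt with h | h
  · rw [h]
  · exact (hrk.2.1 a b h).le

lemma indep_insert {L : Type*} [CompleteLattice L] {A : Set L} {c : L}
    (hA : A ∈ latIndep L) (hc : IsAtom c) (hcA : ¬ c ≤ sSup A) : insert c A ∈ latIndep L := by
  classical
  obtain ⟨ω, hω, hat, hN⟩ := hA
  refine ⟨fun x => if x = c then 0 else ω x + 1, ?_, ?_, ?_⟩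
  · intro x hx y hy hxy
    by_cases h1 : x = c <;> by_cases h2 : y = c <;> simp [h1, h2] at hxy ⊢
    exact hω hx hy hxy
  · rintro b (rfl | hb)
    · exact hc
    · exact hat b hb
  · rintro D hD ⟨hne, a, ha, hlt, hle⟩
    have hcD : c ∉ D := by
      intro h
      have := hlt c h
      simp at this
    have hDA : D ⊆ A := by
      intro d hd
      rcases hD hd with rfl | h
      · exact absurd hd hcD
      · exact h
    have hac : a ≠ c := by
      rintro rfl
      exact hcA (hle.trans (sSup_le_sSup hDA))
    refine hN D hDA ⟨hne, a, ha, ?_, hle⟩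
    intro d hd
    have hdc : d ≠ c := by rintro rfl; exact hcD hd
    have := hlt d hd
    simpa [hac, hdc] using this

lemma indep_empty (L : Type*) [CompleteLattice L] [Fintype L] : (∅ : Set L) ∈ latIndep L := by
  refine ⟨fun x => (Fintype.equivFin L x : ℕ), ?_, ?_, ?_⟩
  · intro x _ y _ h
    exact (Fintype.equivFin L).injective (Fin.ext h)
  · simp
  · rintro D hD ⟨hne, _⟩
    exact hne.ne_empty (subset_empty_iff.1 hD)

lemma indep_card {L : Type*} [CompleteLattice L] [Fintype L] {rk : L → ℕ} (hrk : IsGradedRk rk)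
    (ω : L → ℕ) (hω : Set.InjOn ω {a : L | IsAtom a}) :
    ∀ (n : ℕ) (A : Set L), IsNBB ω A → A.ncard = n → n ≤ rk (sSup A) := by
  intro n
  induction n with
  | zero => intros; omega
  | succ n ih =>
    intro A hA hn
    have hne : A.Nonempty := by
      rw [← Set.ncard_pos]; omega
    obtain ⟨m, hm, hmin⟩ := Set.exists_min_image A ω (Set.toFinite A) hne
    have h1 : n ≤ rk (sSup (A \ {m})) := by
      apply ih
      · exact ⟨fun b hb => hA.1 b hb.1, fun D hD => hA.2 D (hD.trans diff_subset)⟩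
      · rw [Set.ncard_diff_singleton_of_mem hm]; omega
    have h2 : sSup (A \ {m}) < sSup A := by
      refine lt_of_le_of_ne (sSup_le_sSup diff_subset) ?_
      intro heq
      have hmle : m ≤ sSup (A \ {m}) := heq ▸ le_sSup hm
      refine hA.2 (A \ {m}) diff_subset ⟨?_, m, hA.1 m hm, ?_, hmle⟩
      · by_contra h
        rw [Set.not_nonempty_iff_eq_empty] at h
        rw [h] at hmle
        simp at hmle
        exact (hA.1 m hm).1 hmle
      · rintro d ⟨hd, hdm⟩
        refine lt_of_le_of_ne (hmin d hd) ?_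
        intro h
        exact hdm (hω (hA.1 m hm) (hA.1 d hd) h).symm
    have := hrk.2.1 _ _ h2
    omega

/-- Simplified notion of basis. -/
def QB {L : Type*} [CompleteLattice L] (rk : L → ℕ) (B : Set L) : Prop :=
  sSup B = ⊤ ∧ ∀ S ⊆ B, S.ncard = rk (sSup S)

lemma QB.notle {L : Type*} [CompleteLattice L] [Fintype L] {rk : L → ℕ} {B : Set L}
    (h : ∀ S ⊆ B, S.ncard = rk (sSup S)) {S : Set L} (hS : S ⊆ B) {a : L} (ha : a ∈ B)
    (haS : a ∉ S) : ¬ a ≤ sSup S := by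
  intro hle
  have h1 := h S hS
  have h2 := h (insert a S) (insert_subset ha hS)
  rw [sSup_insert, sup_eq_right.2 hle, Set.ncard_insert_of_notMem haS] at h2
  omega

lemma basis_iff {L : Type*} [CompleteLattice L] [Fintype L] [IsAtomistic L]
    {rk : L → ℕ} (hrk : IsGradedRk rk) (B : Set L) : IsLatBasis rk B ↔ QB rk B := by
  constructor
  · rintro ⟨hI, hmax, hg⟩
    refine ⟨?_, hg⟩
    by_contra hne
    have : ∃ c, IsAtom c ∧ ¬ c ≤ sSup B := by
      by_contra! h
      apply hne
      rw [eq_top_iff, ← sSup_atoms_eq_top]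
      exact sSup_le h
    obtain ⟨c, hc, hcB⟩ := this
    have := hmax _ (indep_insert hI hc hcB) (subset_insert _ _)
    exact hcB (le_sSup (this ▸ mem_insert _ _))
  · rintro ⟨htop, hg⟩
    have hat : ∀ b ∈ B, IsAtom b := by
      intro b hb
      have h := hg {b} (singleton_subset_iff.2 hb)
      simp at h
      constructor
      · rintro rfl
        rw [hrk.1] at h; omega
      · intro x hx
        by_contra hx0
        have h1 := hrk.2.1 _ _ hx
        have h2 := hrk.2.1 _ _ (bot_lt_iff_ne_bot.2 hx0)
        omega
    have hind : ∀ S : Set L, S.Finite → S ⊆ B → S ∈ latIndep L := by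
      intro S hS
      induction S, hS using Set.Finite.induction_on with
      | empty => intro _; exact indep_empty L
      | @insert a S ha _ ih =>
        intro hSB
        obtain ⟨haB, hSB⟩ := insert_subset_iff.1 hSB
        exact indep_insert (ih hSB) (hat a haB) (QB.notle hg hSB haB ha)
    refine ⟨hind B (toFinite B) Subset.rfl, ?_, hg⟩
    rintro A ⟨ω, hω, hA⟩ hBA
    have h1 := indep_card hrk ω hω _ A hA rfl
    have h2 := hg B Subset.rfl
    rw [htop] at h2
    have h3 : rk (sSup A) ≤ rk ⊤ := gr_mono hrk le_top
    exact (Set.eq_of_subset_of_ncard_le hBA (by omega) (toFinite A)).symm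

/-- The opposite. -/
def opp {L : Type*} [CompleteLattice L] (I : Set L) : Set Lᵒᵈ :=
  OrderDual.toDual '' {x : L | ∃ a ∈ I, x = sSup (I \ {a})}

/-- Dual rank. -/
def drk {L : Type*} [CompleteLattice L] (rk : L → ℕ) : Lᵒᵈ → ℕ :=
  fun X : Lᵒᵈ => rk ⊤ - rk (OrderDual.ofDual X)

lemma drk_graded {L : Type*} [CompleteLattice L] {rk : L → ℕ} (hrk : IsGradedRk rk) :
    IsGradedRk (drk rk) := by
  refine ⟨?_, ?_, ?_⟩
  · simp [drk]
  · intro a b hab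
    have h1 := hrk.2.1 (OrderDual.ofDual b) (OrderDual.ofDual a) hab
    have h2 : rk (OrderDual.ofDual a) ≤ rk ⊤ := gr_mono hrk le_top
    simp only [drk]; omega
  · intro a b hab
    have h1 := hrk.2.2 (OrderDual.ofDual b) (OrderDual.ofDual a) hab.ofDual
    have h2 : rk (OrderDual.ofDual a) ≤ rk ⊤ := gr_mono hrk le_top
    simp only [drk]; omega

/-- The meet. -/
lemma QB.inf_eq {L : Type*} [CompleteLattice L] [Fintype L] {rk : L → ℕ} (hrk : IsGradedRk rk)
    {I : Set L} (hI : QB rk I) (S : Set L) (hS : S ⊆ I) :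
    sInf ((fun a => sSup (I \ {a})) '' S) = sSup (I \ S) := by
  have hge : ∀ S : Set L, sSup (I \ S) ≤ sInf ((fun a => sSup (I \ {a})) '' S) := by
    intro S
    apply le_sInf
    rintro _ ⟨a, ha, rfl⟩
    exact sSup_le_sSup (diff_subset_diff_right (singleton_subset_iff.2 ha))
  have hle : rk (sInf ((fun a => sSup (I \ {a})) '' S)) + S.ncard ≤ rk ⊤ := by
    have hf := toFinite S
    induction S, hf using Set.Finite.induction_on with
    | empty => simp
    | @insert c S hc _ ih =>
      obtain ⟨hcI, hSI⟩ := insert_subset_iff.1 hS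
      have := ih hSI
      rw [Set.ncard_insert_of_notMem hc]
      have hlt : sInf ((fun a => sSup (I \ {a})) '' insert c S) <
          sInf ((fun a => sSup (I \ {a})) '' S) := by
        refine lt_of_le_of_ne (sInf_le_sInf (image_mono (subset_insert _ _))) ?_
        intro heq
        have h1 : c ≤ sInf ((fun a => sSup (I \ {a})) '' S) :=
          (le_sSup (show c ∈ I \ S from ⟨hcI, hc⟩)).trans (hge S)
        rw [← heq] at h1
        exact QB.notle hI.2 diff_subset hcI (by simp)
          (h1.trans (sInf_le ⟨c, mem_insert _ _, rfl⟩))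
      have := hrk.2.1 _ _ hlt
      omega
  by_contra hne
  have h1 := hrk.2.1 _ _ (lt_of_le_of_ne (hge S) (Ne.symm hne))
  have h2 := hI.2 (I \ S) diff_subset
  have h3 := hI.2 I Subset.rfl
  rw [hI.1] at h3
  have h4 := Set.ncard_diff_add_ncard_of_subset hS
  omega

lemma QB.inj {L : Type*} [CompleteLattice L] [Fintype L] {rk : L → ℕ}
    {I : Set L} (hI : QB rk I) : InjOn (fun a => sSup (I \ {a})) I := by
  intro a ha b hb h
  by_contra hab
  refine QB.notle hI.2 (S := I \ {a}) diff_subset ha (by simp) ?_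
  simp only at h
  rw [h]
  exact le_sSup ⟨ha, hab⟩

lemma opp_eq {L : Type*} [CompleteLattice L] (I : Set L) :
    opp I = (fun a => OrderDual.toDual (sSup (I \ {a}))) '' I := by
  ext x
  simp only [opp, mem_image, mem_setOf_eq]
  constructor
  · rintro ⟨_, ⟨a, ha, rfl⟩, rfl⟩; exact ⟨a, ha, rfl⟩
  · rintro ⟨a, ha, rfl⟩; exact ⟨_, ⟨a, ha, rfl⟩, rfl⟩

lemma QB.sup_opp {L : Type*} [CompleteLattice L] [Fintype L] {rk : L → ℕ} (hrk : IsGradedRk rk)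
    {I : Set L} (hI : QB rk I) (S : Set L) (hS : S ⊆ I) :
    sSup ((fun a => OrderDual.toDual (sSup (I \ {a}))) '' S) = OrderDual.toDual (sSup (I \ S)) := by
  rw [← QB.inf_eq hrk hI S hS, sInf_image, sSup_image]
  simp [toDual_iInf]

lemma QB.opp {L : Type*} [CompleteLattice L] [Fintype L] {rk : L → ℕ} (hrk : IsGradedRk rk)
    {I : Set L} (hI : QB rk I) : QB (drk rk) (opp I) := by
  rw [opp_eq]
  constructor
  · rw [QB.sup_opp hrk hI I Subset.rfl]; simp
  · intro T hT
    obtain ⟨S, hS, rfl⟩ := Set.subset_image_iff.1 hT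
    rw [QB.sup_opp hrk hI S hS, Set.ncard_image_of_injOn]
    · simp only [drk, OrderDual.ofDual_toDual]
      rw [← hI.2 _ diff_subset, ← hI.1, ← hI.2 I Subset.rfl]
      have h4 := Set.ncard_diff_add_ncard_of_subset hS
      omega
    · intro a ha b hb h
      exact QB.inj hI (hS ha) (hS hb) (OrderDual.toDual.injective h)

lemma QB.opp_opp {L : Type*} [CompleteLattice L] [Fintype L] {rk : L → ℕ} (hrk : IsGradedRk rk)
    {I : Set L} (hI : QB rk I) :
    _root_.opp (_root_.opp I) = (fun x => OrderDual.toDual (OrderDual.toDual x)) '' I := by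
  have key : ∀ a ∈ I, sSup (_root_.opp I \ {OrderDual.toDual (sSup (I \ {a}))})
      = OrderDual.toDual a := by
    intro a ha
    have hinj : InjOn (fun a => OrderDual.toDual (sSup (I \ {a}))) I := fun a ha b hb h =>
      QB.inj hI ha hb (OrderDual.toDual.injective h)
    have : _root_.opp I \ {OrderDual.toDual (sSup (I \ {a}))} =
        (fun a => OrderDual.toDual (sSup (I \ {a}))) '' (I \ {a}) := by
      rw [opp_eq, hinj.image_diff_subset (singleton_subset_iff.2 ha), image_singleton]
    rw [this, QB.sup_opp hrk hI _ diff_subset, diff_diff_cancel_left (singleton_subset_iff.2 ha),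
      sSup_singleton]
  rw [opp_eq (_root_.opp I)]
  conv_lhs => rw [show ∀ f : Lᵒᵈ → Lᵒᵈᵒᵈ, f '' (_root_.opp I) =
    f '' ((fun a => OrderDual.toDual (sSup (I \ {a}))) '' I) from fun f => by rw [opp_eq I]]
  rw [image_image]
  apply image_congr
  intro a ha
  rw [key a ha]

theorem basis_opp_bijective
    {L : Type*} [CompleteLattice L] [Fintype L] [IsAtomistic L] [IsCoatomistic L]
    (rk : L → ℕ) (hrk : IsGradedRk rk) :
    Set.BijOn
      (fun I : Set L => OrderDual.toDual '' {x : L | ∃ a ∈ I, x = sSup (I \ {a})})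
      {B : Set L | IsLatBasis rk B}
      {B : Set Lᵒᵈ | IsLatBasis (fun X : Lᵒᵈ => rk ⊤ - rk (OrderDual.ofDual X)) B} := by
  have hd := drk_graded hrk
  have e1 : {B : Set L | IsLatBasis rk B} = {B | QB rk B} := by
    ext B; exact basis_iff hrk B
  have e2 : {B : Set Lᵒᵈ | IsLatBasis (fun X : Lᵒᵈ => rk ⊤ - rk (OrderDual.ofDual X)) B}
      = {B | QB (drk rk) B} := by
    ext B; exact basis_iff hd B
  rw [e1, e2]
  change Set.BijOn (fun I : Set L => opp I) _ _
  refine ⟨fun I hI => QB.opp hrk hI, ?_, ?_⟩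
  · intro I hI J hJ h
    have h1 := QB.opp_opp hrk hI
    have h2 := QB.opp_opp hrk hJ
    simp only at h
    rw [h, h2] at h1
    refine (Set.image_injective.2 ?_ h1).symm
    intro x y hxy
    exact OrderDual.toDual.injective (OrderDual.toDual.injective hxy)
  · intro J hJ
    have hrr : drk (drk rk) = fun x => rk (OrderDual.ofDual (OrderDual.ofDual x)) := by
      funext x
      have h2 : rk (OrderDual.ofDual (OrderDual.ofDual x)) ≤ rk ⊤ := gr_mono hrk le_top
      simp only [drk, OrderDual.ofDual_top, hrk.1]
      omega
    have h1 := QB.opp hd hJ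
    rw [hrr] at h1
    have h2 := QB.opp_opp hd hJ
    refine ⟨(opp J : Set Lᵒᵈᵒᵈ), h1, ?_⟩
    have : (fun x : Lᵒᵈ => OrderDual.toDual (OrderDual.toDual x)) '' J = J := image_id J
    exact h2.trans this
end
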